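/- Let 0 < τ < p < ∞ and 0 < τ < q < ∞, and define the modified maximal operator M_τ f(x) = sup over cubes Q ∋ x of ((1/|Q|)∫_Q |f|^τ)^{1/τ}. Then there is a constant K (depending on p, q, τ, d) such that for any sequence of measurable functions (f_j) on ℝ^d, ‖(Σ_j |M_τ f_j|^q)^{1/q}‖_{L^p} ≤ K ‖(Σ_j |f_j|^q)^{1/q}‖_{L^p}. -/

import Mathlib

open MeasureTheory
open scoped ENNReal

def cubeAt (d : ℕ) (c : Fin d → ℝ) (t : ℝ) : Set (EuclideanSpace ℝ (Fin d)) :=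
  {x | ∀ i, c i ≤ x i ∧ x i ≤ c i + t}

/-- The modified (uncentered, cube-based) maximal operator
`M_τ f(x) = sup_{Q ∋ x} ((1/|Q|)∫_Q |f|^τ)^{1/τ}`. -/
noncomputable def modMaximal (d : ℕ) (τ : ℝ) (f : EuclideanSpace ℝ (Fin d) → ℝ)
    (x : EuclideanSpace ℝ (Fin d)) : ℝ≥0∞ :=
  ⨆ Q : {p : (Fin d → ℝ) × ℝ // 0 < p.2 ∧ x ∈ cubeAt d p.1 p.2},
    ((ENNReal.ofReal ((Q : (Fin d → ℝ) × ℝ).2 ^ d))⁻¹ *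
        ∫⁻ y in cubeAt d (Q : (Fin d → ℝ) × ℝ).1 (Q : (Fin d → ℝ) × ℝ).2,
          ENNReal.ofReal (|f y| ^ τ)) ^ (1 / τ)

/-!
A cube of side `t` lies in a ball of radius `(d + 1) * t` about any of its points. So with
`F j = |f j| ^ τ` one has `M_τ (f j) ^ τ ≤ C * M (F j)`, where `M` is the maximal operator over
balls, and the claim becomes the vector-valued inequality for `M` in `L^r(ℓ^s)` with
`r = p / τ > 1` and `s = q / τ > 1`.

The Vitali covering lemma and the layer-cake formula give the Fefferman–Stein weighted inequality
`∫ w (M f) ^ s ≤ C ∫ (M w) f ^ s`, whose case `w = 1` is the boundedness of `M` on `L^s`.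

* If `r ≤ s`, put `θ = r / s`, `w = (∑ F j ^ s) ^ (1 / s)`, and write `F j = G j ^ θ * w ^ (1 - θ)`.
  Hölder's inequality on each ball gives `M (F j) ≤ M (G j) ^ θ * (M w) ^ (1 - θ)` pointwise. Since
  `∑ G j ^ r = w ^ r`, Hölder's inequality and the `L^r` bounds for `M (G j)` and `M w` conclude.
* If `r > s`, put `ρ = r / s` and test `S = ∑ M (F j) ^ s` against the weight `w = S ^ (ρ - 1)`:
  `∫ S ^ ρ ≤ C ∫ (M w) ∑ F j ^ s`. By Hölder's inequality and the bound for `M` on the dual space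
  `L^(ρ / (ρ - 1))`, a power of `∫ S ^ ρ` less than one appears on the right and is absorbed; it is
  finite because only finite sums need to be considered.
-/

open Metric Set
open scoped NNReal

section LayerCake

variable {α : Type*} [MeasurableSpace α] {μ ν : Measure α} {f g : α → ℝ≥0∞} {p : ℝ}

theorem setLIntegral_Ioi_ofReal_rpow_eq_top (p : ℝ) :
    ∫⁻ t in Ioi (0 : ℝ), ENNReal.ofReal (t ^ p) = ∞ := by
  by_contra h
  refine not_integrableOn_Ioi_rpow p ⟨by fun_prop, ?_⟩
  rw [hasFiniteIntegral_iff_ofReal]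
  · exact Ne.lt_top h
  · filter_upwards [ae_restrict_mem measurableSet_Ioi] with t ht using Real.rpow_nonneg ht.le p

theorem lintegral_rpow_eq_lintegral_meas_ofReal_lt_mul (μ : Measure α) (hf : AEMeasurable f μ)
    (hp : 0 < p) :
    ∫⁻ x, f x ^ p ∂μ = ENNReal.ofReal p *
      ∫⁻ t in Ioi (0 : ℝ), μ {x | ENNReal.ofReal t < f x} * ENNReal.ofReal (t ^ (p - 1)) := by
  by_cases hfin : ∀ᵐ x ∂μ, f x ≠ ∞
  · calc ∫⁻ x, f x ^ p ∂μ = ∫⁻ x, ENNReal.ofReal ((f x).toReal ^ p) ∂μ := by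
          refine lintegral_congr_ae ?_
          filter_upwards [hfin] with x hx
          rw [← ENNReal.ofReal_rpow_of_nonneg ENNReal.toReal_nonneg hp.le, ENNReal.ofReal_toReal hx]
      _ = _ := lintegral_rpow_eq_lintegral_meas_lt_mul μ
          (Filter.Eventually.of_forall fun _ => ENNReal.toReal_nonneg) hf.ennreal_toReal hp
      _ = _ := by
          congr 1
          refine setLIntegral_congr_fun measurableSet_Ioi fun t ht => ?_
          congr 1
          refine measure_congr ?_
          filter_upwards [hfin] with x hx
          exact propext (ENNReal.ofReal_lt_iff_lt_toReal (le_of_lt ht) hx).symm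
  · have htop : μ {x | f x = ∞} ≠ 0 := by simpa [ae_iff] using hfin
    have hleft : ∫⁻ x, f x ^ p ∂μ = ∞ := by
      by_contra h
      refine hfin ?_
      filter_upwards [ae_lt_top' (hf.pow_const p) h] with x hx hx'
      simp [hx', hp] at hx
    have hright : ∫⁻ t in Ioi (0 : ℝ),
        μ {x | ENNReal.ofReal t < f x} * ENNReal.ofReal (t ^ (p - 1)) = ∞ := by
      refine top_le_iff.1 ?_
      calc ∞ = μ {x | f x = ∞} * ∫⁻ t in Ioi (0 : ℝ), ENNReal.ofReal (t ^ (p - 1)) := by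
            rw [setLIntegral_Ioi_ofReal_rpow_eq_top, ENNReal.mul_top htop]
        _ = ∫⁻ t in Ioi (0 : ℝ), μ {x | f x = ∞} * ENNReal.ofReal (t ^ (p - 1)) :=
            (lintegral_const_mul _ (by fun_prop)).symm
        _ ≤ _ := by
            gcongr with t x
            rintro hx
            exact hx ▸ ENNReal.ofReal_lt_top
    rw [hleft, hright, ENNReal.mul_top (by simpa using hp)]

theorem lintegral_rpow_le_of_mul_meas_lt_le (hf : Measurable f) (hg : Measurable g) (hp : 1 < p)
    {C : ℝ≥0} (h : ∀ t : ℝ, 0 < t → ENNReal.ofReal t * μ {x | ENNReal.ofReal t < g x} ≤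
      C * ∫⁻ x in {x | ENNReal.ofReal t < f x}, f x ∂ν) :
    ∫⁻ x, g x ^ p ∂μ ≤ ENNReal.ofReal (p / (p - 1)) * C * ∫⁻ x, f x ^ p ∂ν := by
  have hp1 : 0 < p - 1 := sub_pos.2 hp
  have level : ∀ t ∈ Ioi (0 : ℝ), μ {x | ENNReal.ofReal t < g x} * ENNReal.ofReal (t ^ (p - 1)) ≤
      C * (ν.withDensity f {x | ENNReal.ofReal t < f x} * ENNReal.ofReal (t ^ (p - 1 - 1))) := by
    intro t (ht : 0 < t)
    have hpow : ENNReal.ofReal (t ^ (p - 1)) =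
        ENNReal.ofReal t * ENNReal.ofReal (t ^ (p - 1 - 1)) := by
      rw [← ENNReal.ofReal_mul ht.le, Real.rpow_sub_one ht.ne' (p - 1), mul_div_cancel₀ _ ht.ne']
    rw [withDensity_apply _ (measurableSet_lt measurable_const hf), hpow, ← mul_assoc,
      mul_comm (μ _), ← mul_assoc]
    exact mul_le_mul_left (h t ht) _
  calc ∫⁻ x, g x ^ p ∂μ
      ≤ ENNReal.ofReal p * (C * ∫⁻ t in Ioi (0 : ℝ),
          ν.withDensity f {x | ENNReal.ofReal t < f x} * ENNReal.ofReal (t ^ (p - 1 - 1))) := by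
        rw [lintegral_rpow_eq_lintegral_meas_ofReal_lt_mul μ hg.aemeasurable (zero_lt_one.trans hp),
          ← lintegral_const_mul' _ _ ENNReal.coe_ne_top]
        gcongr ENNReal.ofReal p * ?_
        exact setLIntegral_mono' measurableSet_Ioi level
    _ = ENNReal.ofReal (p / (p - 1)) * C * ∫⁻ x, f x ^ (p - 1) ∂ν.withDensity f := by
        rw [lintegral_rpow_eq_lintegral_meas_ofReal_lt_mul _ hf.aemeasurable hp1,
          div_eq_mul_inv, ENNReal.ofReal_mul (by positivity), ENNReal.ofReal_inv_of_pos hp1]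
        calc _ = (ENNReal.ofReal (p - 1))⁻¹ * ENNReal.ofReal (p - 1) * _ := by
              rw [ENNReal.inv_mul_cancel (by simpa using hp) ENNReal.ofReal_ne_top, one_mul]
          _ = _ := by ring
    _ = ENNReal.ofReal (p / (p - 1)) * C * ∫⁻ x, f x ^ p ∂ν := by
        rw [lintegral_withDensity_eq_lintegral_mul _ hf (hf.pow_const _)]
        congr! 3 with x
        conv_rhs => rw [← add_sub_cancel 1 p, ENNReal.rpow_add_of_nonneg _ _ zero_le_one hp1.le,
          ENNReal.rpow_one]
        rfl

end LayerCake

section LpSums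

variable {α : Type*} [MeasurableSpace α] {μ : Measure α}

theorem lintegral_tsum_rpow_eq_iSup {ι : Type*} [Countable ι] {f : ι → α → ℝ≥0∞}
    (hf : ∀ i, Measurable (f i)) {p : ℝ} (hp : 0 < p) :
    ∫⁻ x, (∑' i, f i x) ^ p ∂μ = ⨆ t : Finset ι, ∫⁻ x, (∑ i ∈ t, f i x) ^ p ∂μ := by
  have hpow : ∀ x, (∑' i, f i x) ^ p = ⨆ t : Finset ι, (∑ i ∈ t, f i x) ^ p := fun x => by
    rw [ENNReal.tsum_eq_iSup_sum]
    exact (ENNReal.orderIsoRpow p hp).map_iSup _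
  simp_rw [hpow]
  refine lintegral_iSup_directed_of_measurable
    (fun t => (Finset.measurable_fun_sum t fun i _ => hf i).pow_const p) ?_
  refine Monotone.directed_le fun t u htu x => ?_
  exact ENNReal.rpow_le_rpow (Finset.sum_le_sum_of_subset htu) hp.le

theorem lintegral_sum_rpow_ne_top {ι : Type*} {f : ι → α → ℝ≥0∞} {t : Finset ι}
    (hf : ∀ i ∈ t, Measurable (f i)) {p : ℝ} (hp : 1 ≤ p)
    (h : ∀ i ∈ t, ∫⁻ x, f i x ^ p ∂μ ≠ ∞) : ∫⁻ x, (∑ i ∈ t, f i x) ^ p ∂μ ≠ ∞ := by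
  refine ne_top_of_le_ne_top ?_
    (lintegral_mono fun x => ENNReal.rpow_sum_le_const_mul_sum_rpow t (fun i => f i x) hp)
  have hp' : 0 ≤ p - 1 := sub_nonneg.2 hp
  rw [lintegral_const_mul' _ _ (by finiteness),
    lintegral_finsetSum' _ fun i hi => ((hf i hi).pow_const p).aemeasurable]
  exact ENNReal.mul_ne_top (by finiteness) (ENNReal.sum_ne_top.2 h)

end LpSums

theorem le_rpow_of_le_mul_rpow_one_sub_inv {a b : ℝ≥0∞} {p : ℝ} (hp : 0 < p) (ha : a ≠ ∞)
    (h : a ≤ b * a ^ (1 - p⁻¹)) : a ≤ b ^ p := by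
  rcases eq_or_ne a 0 with rfl | ha0
  · exact zero_le
  have hpow : a ^ p⁻¹ * a ^ (1 - p⁻¹) = a := by
    rw [← ENNReal.rpow_add _ _ ha0 ha, add_sub_cancel, ENNReal.rpow_one]
  rw [← ENNReal.rpow_inv_le_iff hp,
    ← ENNReal.mul_le_mul_iff_left (c := a ^ (1 - p⁻¹)) (by simp [ha0, ha]) (by finiteness), hpow]
  exact h

-- For `θ < 1` the exponent `1 - θ⁻¹` is negative; `a = b = 0` is allowed because `0 * ∞ = 0`.
theorem rpow_mul_rpow_one_sub_inv_cancel {a b : ℝ≥0∞} (hab : a ≤ b) (hb : b ≠ ∞) {θ : ℝ}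
    (hθ : 0 < θ) : (a ^ θ⁻¹ * b ^ (1 - θ⁻¹)) ^ θ * b ^ (1 - θ) = a := by
  rcases eq_or_ne b 0 with rfl | hb0
  · simp [nonpos_iff_eq_zero.1 hab, hθ]
  rw [ENNReal.mul_rpow_of_nonneg _ _ hθ.le, ENNReal.rpow_inv_rpow hθ.ne', ← ENNReal.rpow_mul,
    mul_assoc, ← ENNReal.rpow_add _ _ hb0 hb]
  have : (1 - θ⁻¹) * θ + (1 - θ) = 0 := by field_simp; ring
  rw [this, ENNReal.rpow_zero, mul_one]

theorem le_mul_lintegral_rpow_of_le_lintegral_mul {α : Type*} [MeasurableSpace α] {μ : Measure α}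
    {f g : α → ℝ≥0∞} (hf : AEMeasurable f μ) (hg : AEMeasurable g μ) {p q : ℝ}
    (hpq : p.HolderConjugate q) {a A B : ℝ≥0∞} (ha : a ≠ ∞) (h : a ≤ A * ∫⁻ x, f x * g x ∂μ)
    (hf_le : ∫⁻ x, f x ^ q ∂μ ≤ B * a) :
    a ≤ (A * B ^ q⁻¹) ^ p * ∫⁻ x, g x ^ p ∂μ := by
  have hp := hpq.pos
  have hq := hpq.symm.pos
  have habsorb : a ≤ A * B ^ q⁻¹ * (∫⁻ x, g x ^ p ∂μ) ^ p⁻¹ * a ^ (1 - p⁻¹) :=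
    calc a ≤ A * ∫⁻ x, f x * g x ∂μ := h
      _ ≤ A * ((∫⁻ x, f x ^ q ∂μ) ^ q⁻¹ * (∫⁻ x, g x ^ p ∂μ) ^ p⁻¹) := by
          gcongr
          simpa only [one_div, Pi.mul_apply] using
            ENNReal.lintegral_mul_le_Lp_mul_Lq μ hpq.symm hf hg
      _ ≤ A * ((B * a) ^ q⁻¹ * (∫⁻ x, g x ^ p ∂μ) ^ p⁻¹) := by gcongr
      _ = _ := by
          rw [ENNReal.mul_rpow_of_nonneg _ _ (by positivity), hpq.one_sub_inv]
          ring
  refine (le_rpow_of_le_mul_rpow_one_sub_inv hp ha habsorb).trans_eq ?_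
  rw [ENNReal.mul_rpow_of_nonneg _ _ hp.le, ENNReal.rpow_inv_rpow hp.ne']

theorem tsum_rpow_mul_tsum_rpow_eq {ι : Type*} {a : ι → ℝ≥0∞} {s ρ : ℝ} (hs : 0 < s) (hρ : 0 < ρ)
    (ha : ∑' i, a i ^ s ≠ ∞) :
    ∑' i, (a i ^ ρ⁻¹ * ((∑' j, a j ^ s) ^ s⁻¹) ^ (1 - ρ⁻¹)) ^ (s * ρ) = (∑' i, a i ^ s) ^ ρ := by
  set T := ∑' i, a i ^ s
  have hterm : ∀ i, (a i ^ ρ⁻¹ * (T ^ s⁻¹) ^ (1 - ρ⁻¹)) ^ (s * ρ) = a i ^ s * T ^ (ρ - 1) := by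
    intro i
    rw [ENNReal.mul_rpow_of_nonneg _ _ (by positivity)]
    simp only [← ENNReal.rpow_mul]
    congr 2 <;> field_simp
  simp_rw [hterm, ENNReal.tsum_mul_right]
  change T * T ^ (ρ - 1) = T ^ ρ
  rcases eq_or_ne T 0 with h0 | h0
  · simp [h0, hρ]
  · conv_lhs => rw [← ENNReal.rpow_one T, ← ENNReal.rpow_mul, one_mul, ← ENNReal.rpow_add _ _ h0 ha,
      add_sub_cancel]

theorem tsum_rpow_rpow_le_of_forall_le {ι : Type*} {a b : ι → ℝ≥0∞} {c : ℝ≥0∞} {s ρ : ℝ}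
    (hs : 0 ≤ s) (hρ : 0 ≤ ρ) (h : ∀ i, a i ≤ b i ^ ρ * c ^ (1 - ρ)) :
    (∑' i, a i ^ s) ^ ρ ≤ (∑' i, b i ^ (s * ρ)) ^ ρ * (c ^ (s * ρ)) ^ (1 - ρ) := by
  have hterm : ∀ i, a i ^ s ≤ b i ^ (s * ρ) * c ^ ((1 - ρ) * s) := fun i => by
    rw [mul_comm s ρ, ENNReal.rpow_mul, ENNReal.rpow_mul, ← ENNReal.mul_rpow_of_nonneg _ _ hs]
    exact ENNReal.rpow_le_rpow (h i) hs
  calc (∑' i, a i ^ s) ^ ρ ≤ ((∑' i, b i ^ (s * ρ)) * c ^ ((1 - ρ) * s)) ^ ρ := by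
        rw [← ENNReal.tsum_mul_right]
        gcongr with i
        exact hterm i
    _ = _ := by
        rw [ENNReal.mul_rpow_of_nonneg _ _ hρ, ← ENNReal.rpow_mul, ← ENNReal.rpow_mul]
        ring_nf

section Covering

variable {E : Type*} [PseudoMetricSpace E] [TopologicalSpace.SeparableSpace E] [MeasurableSpace E]
  [OpensMeasurableSpace E] {ν κ : Measure E} {T : Set (E × ℝ)}

theorem measure_biUnion_ball_le_of_forall_le
    (h : ∀ b ∈ T, ν (closedBall b.1 (5 * b.2)) ≤ κ (ball b.1 b.2))
    (hpos : ∀ b ∈ T, 0 < b.2) {R : ℝ} (hR : ∀ b ∈ T, b.2 ≤ R) :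
    ν (⋃ b ∈ T, ball b.1 b.2) ≤ κ univ := by
  obtain ⟨u, huT, hdisj, hu⟩ := Vitali.exists_disjoint_subfamily_covering_enlargement_closedBall
    T Prod.fst Prod.snd R hR 5 (by norm_num)
  have hdisj' : u.PairwiseDisjoint fun b : E × ℝ => ball b.1 b.2 :=
    hdisj.mono fun b => ball_subset_closedBall
  have hcount : u.Countable := hdisj'.countable_of_isOpen (fun _ _ => isOpen_ball)
    fun b hb => nonempty_ball.2 (hpos b (huT hb))
  have hcover : ⋃ b ∈ T, ball b.1 b.2 ⊆ ⋃ b ∈ u, closedBall b.1 (5 * b.2) := by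
    refine iUnion₂_subset fun b hb => ?_
    obtain ⟨b', hb', hsub⟩ := hu b hb
    exact (ball_subset_closedBall.trans hsub).trans
      (subset_biUnion_of_mem (u := fun b : E × ℝ => closedBall b.1 (5 * b.2)) hb')
  calc ν (⋃ b ∈ T, ball b.1 b.2)
      ≤ ν (⋃ b ∈ u, closedBall b.1 (5 * b.2)) := measure_mono hcover
    _ ≤ ∑' b : u, ν (closedBall b.1.1 (5 * b.1.2)) := measure_biUnion_le ν hcount _
    _ ≤ ∑' b : u, κ (ball b.1.1 b.1.2) := ENNReal.tsum_le_tsum fun b => h b (huT b.2)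
    _ = κ (⋃ b ∈ u, ball b.1 b.2) :=
        (measure_biUnion hcount hdisj' fun _ _ => measurableSet_ball).symm
    _ ≤ κ univ := measure_mono (subset_univ _)

theorem measure_biUnion_ball_le
    (h : ∀ b ∈ T, 0 < b.2 → ν (closedBall b.1 (5 * b.2)) ≤ κ (ball b.1 b.2)) :
    ν (⋃ b ∈ T, ball b.1 b.2) ≤ κ univ := by
  set S : ℕ → Set (E × ℝ) := fun n => {b ∈ T | 0 < b.2 ∧ b.2 ≤ n}
  have hcover : ⋃ b ∈ T, ball b.1 b.2 ⊆ ⋃ n, ⋃ b ∈ S n, ball b.1 b.2 := by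
    refine iUnion₂_subset fun b hb x hx => ?_
    obtain ⟨n, hn⟩ := exists_nat_ge b.2
    exact mem_iUnion.2 ⟨n, mem_biUnion (show b ∈ S n from ⟨hb, pos_of_mem_ball hx, hn⟩) hx⟩
  have hmono : Monotone fun n => ⋃ b ∈ S n, ball b.1 b.2 := fun m n hmn =>
    biUnion_subset_biUnion_left fun b hb => ⟨hb.1, hb.2.1, hb.2.2.trans (by exact_mod_cast hmn)⟩
  refine (measure_mono hcover).trans ?_
  rw [hmono.measure_iUnion]
  exact iSup_le fun n => measure_biUnion_ball_le_of_forall_le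
    (fun b hb => h b hb.1 hb.2.1) (fun b hb => hb.2.1) fun b hb => hb.2.2

end Covering

/-- The maximal operator `M` over open balls containing the point (not necessarily centred at it),
acting on nonnegative functions so that no integrability is needed. -/
noncomputable def ballMaximal {E : Type*} [PseudoMetricSpace E] [MeasurableSpace E]
    (μ : Measure E) (f : E → ℝ≥0∞) (x : E) : ℝ≥0∞ :=
  ⨆ (z : E) (r : ℝ) (_ : x ∈ ball z r), ⨍⁻ y in ball z r, f y ∂μ

section BallMaximal

variable {E : Type*} [PseudoMetricSpace E] [MeasurableSpace E] {μ : Measure E} {f g : E → ℝ≥0∞}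
  {x : E}

theorem setLAverage_le_ballMaximal (μ : Measure E) (f : E → ℝ≥0∞) {z : E} {r : ℝ}
    (hx : x ∈ ball z r) : ⨍⁻ y in ball z r, f y ∂μ ≤ ballMaximal μ f x :=
  le_iSup₂_of_le z r (le_iSup_of_le hx le_rfl)

theorem ballMaximal_le_iff {c : ℝ≥0∞} :
    ballMaximal μ f x ≤ c ↔ ∀ z r, x ∈ ball z r → ⨍⁻ y in ball z r, f y ∂μ ≤ c := by
  simp only [ballMaximal, iSup_le_iff]

theorem setOf_lt_ballMaximal (μ : Measure E) (f : E → ℝ≥0∞) (c : ℝ≥0∞) :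
    {x | c < ballMaximal μ f x} =
      ⋃ b ∈ {b : E × ℝ | c < ⨍⁻ y in ball b.1 b.2, f y ∂μ}, ball b.1 b.2 := by
  ext x
  simp only [ballMaximal, lt_iSup_iff, mem_ofPred_eq, mem_iUnion, Prod.exists, exists_prop]
  grind

@[fun_prop]
theorem measurable_ballMaximal [OpensMeasurableSpace E] (μ : Measure E) (f : E → ℝ≥0∞) :
    Measurable (ballMaximal μ f) := by
  refine measurable_of_Ioi fun c => ?_
  change MeasurableSet {x | c < ballMaximal μ f x}
  rw [setOf_lt_ballMaximal]
  exact (isOpen_biUnion fun _ _ => isOpen_ball).measurableSet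

theorem ballMaximal_mono_ae (h : f ≤ᵐ[μ] g) (x : E) : ballMaximal μ f x ≤ ballMaximal μ g x := by
  refine ballMaximal_le_iff.2 fun z r hx => le_trans ?_ (setLAverage_le_ballMaximal μ g hx)
  rw [setLAverage_eq, setLAverage_eq]
  gcongr ?_ / _
  exact lintegral_mono_ae (ae_restrict_of_ae h)

theorem ballMaximal_const_le (μ : Measure E) (c : ℝ≥0∞) (x : E) :
    ballMaximal μ (fun _ => c) x ≤ c := by
  refine ballMaximal_le_iff.2 fun z r _ => ?_
  rw [setLAverage_eq, setLIntegral_const]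
  exact ENNReal.div_le_of_le_mul le_rfl

theorem ballMaximal_add_le (hf : Measurable f) (g : E → ℝ≥0∞) (x : E) :
    ballMaximal μ (fun y => f y + g y) x ≤ ballMaximal μ f x + ballMaximal μ g x := by
  refine ballMaximal_le_iff.2 fun z r hx => ?_
  rw [laverage, lintegral_add_left hf]
  exact add_le_add (setLAverage_le_ballMaximal μ f hx) (setLAverage_le_ballMaximal μ g hx)

theorem ballMaximal_rpow_mul_rpow_le (hf : Measurable f) (hg : Measurable g) {p q : ℝ} (hp : 0 ≤ p)
    (hq : 0 ≤ q) (hpq : p + q = 1) (x : E) :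
    ballMaximal μ (fun y => f y ^ p * g y ^ q) x ≤
      ballMaximal μ f x ^ p * ballMaximal μ g x ^ q := by
  refine ballMaximal_le_iff.2 fun z r hx => ?_
  calc ⨍⁻ y in ball z r, f y ^ p * g y ^ q ∂μ
      ≤ (⨍⁻ y in ball z r, f y ∂μ) ^ p * (⨍⁻ y in ball z r, g y ∂μ) ^ q :=
        ENNReal.lintegral_mul_norm_pow_le hf.aemeasurable hg.aemeasurable hp hq hpq
    _ ≤ _ := by gcongr <;> exact setLAverage_le_ballMaximal μ _ hx

theorem ballMaximal_le_rpow_mul_rpow (hf : Measurable f) (hg : Measurable g) (hfg : ∀ y, f y ≤ g y)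
    (hg_top : ∀ᵐ y ∂μ, g y ≠ ∞) {θ : ℝ} (hθ : 0 < θ) (hθ' : θ ≤ 1) (x : E) :
    ballMaximal μ f x ≤
      ballMaximal μ (fun y => f y ^ θ⁻¹ * g y ^ (1 - θ⁻¹)) x ^ θ * ballMaximal μ g x ^ (1 - θ) := by
  refine le_trans (ballMaximal_mono_ae ?_ x)
    (ballMaximal_rpow_mul_rpow_le (by fun_prop) hg hθ.le (sub_nonneg.2 hθ') (add_sub_cancel _ _) x)
  filter_upwards [hg_top] with y hy
  exact (rpow_mul_rpow_one_sub_inv_cancel (hfg y) hy hθ).ge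

theorem lintegral_tsum_ballMaximal_rpow_le_mul [OpensMeasurableSpace E] {ι : Type*} [Countable ι]
    {F : ι → E → ℝ≥0∞} (hF : ∀ i, Measurable (F i)) {w : E → ℝ≥0∞} (hw : Measurable w)
    (hFw : ∀ i x, F i x ≤ w x) (hw_top : ∀ᵐ x ∂μ, w x ≠ ∞) {s ρ : ℝ} (hs : 0 ≤ s) (hρ : 0 < ρ)
    (hρ' : ρ ≤ 1) :
    ∫⁻ x, (∑' i, ballMaximal μ (F i) x ^ s) ^ ρ ∂μ ≤
      (∫⁻ x, ∑' i, ballMaximal μ (fun y => F i y ^ ρ⁻¹ * w y ^ (1 - ρ⁻¹)) x ^ (s * ρ) ∂μ) ^ ρ *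
        (∫⁻ x, ballMaximal μ w x ^ (s * ρ) ∂μ) ^ (1 - ρ) := by
  refine (lintegral_mono fun x => tsum_rpow_rpow_le_of_forall_le hs hρ.le fun i =>
    ballMaximal_le_rpow_mul_rpow (hF i) hw (hFw i) hw_top hρ hρ' x).trans ?_
  exact ENNReal.lintegral_mul_norm_pow_le (Measurable.tsum fun i => by fun_prop).aemeasurable
    (by fun_prop) hρ.le (sub_nonneg.2 hρ') (add_sub_cancel _ _)

theorem ballMaximal_le_add_ballMaximal_indicator (c : ℝ≥0∞) (x : E) :
    ballMaximal μ f x ≤ c + ballMaximal μ ({y | c < f y}.indicator f) x := by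
  have hle : f ≤ fun y => c + {y | c < f y}.indicator f y := fun y => by
    by_cases hy : y ∈ {y | c < f y}
    · simp only [indicator_of_mem hy, le_add_self]
    · simpa only [indicator_of_notMem hy, add_zero] using not_lt.1 hy
  calc ballMaximal μ f x ≤ ballMaximal μ (fun y => c + {y | c < f y}.indicator f y) x :=
        ballMaximal_mono_ae (.of_forall hle) x
    _ ≤ _ := ballMaximal_add_le measurable_const _ x
    _ ≤ _ := by
        gcongr
        exact ballMaximal_const_le μ c x

end BallMaximal

/-- A (globally) doubling measure, finite on balls: the setting of spaces of homogeneous type.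
Mathlib's `IsUnifLocDoublingMeasure` only controls balls of small radius, whereas the maximal
operator averages over balls of every size. -/
class IsDoublingMeasure {E : Type*} [PseudoMetricSpace E] [MeasurableSpace E] (μ : Measure E) :
    Prop where
  exists_measure_ball_two_mul_le : ∃ C : ℝ≥0, ∀ z r, μ (ball z (2 * r)) ≤ C * μ (ball z r)
  measure_ball_ne_top : ∀ z r, μ (ball z r) ≠ ∞

instance isDoublingMeasure_of_isAddHaarMeasure {E : Type*} [NormedAddCommGroup E]
    [NormedSpace ℝ E] [FiniteDimensional ℝ E] [MeasurableSpace E] [BorelSpace E] (μ : Measure E)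
    [μ.IsAddHaarMeasure] : IsDoublingMeasure μ where
  exists_measure_ball_two_mul_le := by
    refine ⟨2 ^ Module.finrank ℝ E, fun z r => le_of_eq ?_⟩
    rw [Measure.addHaar_ball_mul_of_pos μ z two_pos, Measure.addHaar_ball_center μ z]
    simp [ENNReal.ofReal_pow]
  measure_ball_ne_top _ _ := measure_ball_lt_top.ne

section MaximalInequalities

variable {E : Type*} [PseudoMetricSpace E] [MeasurableSpace E]
  (μ : Measure E) [IsDoublingMeasure μ]

theorem exists_measure_ball_eight_mul_le :
    ∃ C : ℝ≥0, ∀ z r, μ (ball z (8 * r)) ≤ C * μ (ball z r) := by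
  obtain ⟨C, hC⟩ := IsDoublingMeasure.exists_measure_ball_two_mul_le (μ := μ)
  refine ⟨C ^ 3, fun z r => ?_⟩
  calc μ (ball z (8 * r)) = μ (ball z (2 * (2 * (2 * r)))) := by ring_nf
    _ ≤ C * (C * (C * μ (ball z r))) := by
        refine (hC _ _).trans ?_
        gcongr
        refine (hC _ _).trans ?_
        gcongr
        exact hC _ _
    _ = _ := by push_cast; ring

variable [OpensMeasurableSpace E]

theorem exists_mul_setLIntegral_closedBall_le :
    ∃ C : ℝ≥0, ∀ (w f : E → ℝ≥0∞), Measurable f → ∀ (c : ℝ≥0∞) (z : E) (r : ℝ), 0 < r →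
      c < ⨍⁻ y in ball z r, f y ∂μ →
      c * ∫⁻ y in closedBall z (5 * r), w y ∂μ ≤
        C * ∫⁻ y in ball z r, ballMaximal μ w y * f y ∂μ := by
  obtain ⟨C, hC⟩ := exists_measure_ball_eight_mul_le μ
  refine ⟨C, fun w f hf c z r hr hc => ?_⟩
  have hfin := IsDoublingMeasure.measure_ball_ne_top (μ := μ)
  set a := ⨍⁻ y in ball z (8 * r), w y ∂μ
  have ha : ∀ y ∈ ball z r, a ≤ ballMaximal μ w y := fun y hy =>
    setLAverage_le_ballMaximal μ w (ball_subset_ball (by linarith) hy)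
  calc c * ∫⁻ y in closedBall z (5 * r), w y ∂μ
      ≤ c * ∫⁻ y in ball z (8 * r), w y ∂μ := by
        gcongr
        exact closedBall_subset_ball (by linarith)
    _ = c * (μ (ball z (8 * r)) * a) := by rw [measure_mul_setLAverage _ (hfin _ _)]
    _ ≤ c * (C * μ (ball z r) * a) := by
        gcongr
        exact hC z r
    _ = C * (a * (μ (ball z r) * c)) := by ring
    _ ≤ C * (a * (μ (ball z r) * ⨍⁻ y in ball z r, f y ∂μ)) := by gcongr
    _ = C * ∫⁻ y in ball z r, a * f y ∂μ := by
        rw [measure_mul_setLAverage _ (hfin _ _), lintegral_const_mul _ hf]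
    _ ≤ _ := by
        gcongr C * ?_
        refine setLIntegral_mono' measurableSet_ball fun y hy => ?_
        gcongr
        exact ha y hy

variable [TopologicalSpace.SeparableSpace E]

theorem exists_mul_withDensity_lt_ballMaximal_le :
    ∃ C : ℝ≥0, ∀ (w f : E → ℝ≥0∞), Measurable f → ∀ c : ℝ≥0∞,
      c * μ.withDensity w {x | c < ballMaximal μ f x} ≤
        C * ∫⁻ x, f x ∂μ.withDensity (ballMaximal μ w) := by
  obtain ⟨C, hC⟩ := exists_mul_setLIntegral_closedBall_le μ
  refine ⟨C, fun w f hf c => ?_⟩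
  have hcover := measure_biUnion_ball_le (ν := c • μ.withDensity w)
    (κ := (C : ℝ≥0∞) • (μ.withDensity (ballMaximal μ w * f)))
    (T := {b : E × ℝ | c < ⨍⁻ y in ball b.1 b.2, f y ∂μ}) fun b hb hr => by
      simpa only [Measure.smul_apply, smul_eq_mul, Pi.mul_apply,
        withDensity_apply _ measurableSet_closedBall, withDensity_apply _ measurableSet_ball] using
        hC w f hf c b.1 b.2 hr hb
  rw [setOf_lt_ballMaximal, lintegral_withDensity_eq_lintegral_mul _ (by fun_prop) hf]
  simpa only [Measure.smul_apply, smul_eq_mul,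
    withDensity_apply _ MeasurableSet.univ, setLIntegral_univ] using hcover

theorem exists_lintegral_mul_ballMaximal_rpow_le {s : ℝ} (hs : 1 < s) :
    ∃ C : ℝ≥0, ∀ w f : E → ℝ≥0∞, Measurable w → Measurable f →
      ∫⁻ x, w x * ballMaximal μ f x ^ s ∂μ ≤ C * ∫⁻ x, ballMaximal μ w x * f x ^ s ∂μ := by
  have hs0 : 0 ≤ s := zero_le_one.trans hs.le
  obtain ⟨C, weak⟩ := exists_mul_withDensity_lt_ballMaximal_le μ
  refine ⟨2 ^ s * ((s / (s - 1)).toNNReal * C), fun w f hw hf => ?_⟩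
  have level : ∀ t : ℝ, 0 < t →
      ENNReal.ofReal t * μ.withDensity w {x | ENNReal.ofReal t < ballMaximal μ f x / 2} ≤
        C * ∫⁻ x in {x | ENNReal.ofReal t < f x}, f x ∂μ.withDensity (ballMaximal μ w) := by
    intro t _
    have hset : MeasurableSet {x | ENNReal.ofReal t < f x} := measurableSet_lt measurable_const hf
    rw [← lintegral_indicator hset]
    refine le_trans ?_ (weak w _ (hf.indicator hset) (ENNReal.ofReal t))
    refine mul_le_mul_right (measure_mono fun x hx => ?_) _
    have hlt : ENNReal.ofReal t + ENNReal.ofReal t < ballMaximal μ f x := by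
      rw [← mul_two]
      exact (ENNReal.lt_div_iff_mul_lt (by simp) (by simp)).1 hx
    exact (ENNReal.add_lt_add_iff_left ENNReal.ofReal_ne_top).1
      (hlt.trans_le (ballMaximal_le_add_ballMaximal_indicator _ x))
  have strong := lintegral_rpow_le_of_mul_meas_lt_le hf (by fun_prop) hs level
  rw [lintegral_withDensity_eq_lintegral_mul _ hw (by fun_prop),
    lintegral_withDensity_eq_lintegral_mul _ (by fun_prop) (by fun_prop)] at strong
  calc ∫⁻ x, w x * ballMaximal μ f x ^ s ∂μ
      = 2 ^ s * ∫⁻ x, w x * (ballMaximal μ f x / 2) ^ s ∂μ := by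
        rw [← lintegral_const_mul' _ _ (by finiteness)]
        refine lintegral_congr fun x => ?_
        rw [mul_left_comm, ← ENNReal.mul_rpow_of_nonneg _ _ hs0,
          ENNReal.mul_div_cancel (by simp) (by simp)]
    _ ≤ 2 ^ s * (ENNReal.ofReal (s / (s - 1)) * C * ∫⁻ x, ballMaximal μ w x * f x ^ s ∂μ) := by
        gcongr
        exact strong
    _ = _ := by
        rw [ENNReal.ofReal]
        push_cast [ENNReal.coe_rpow_of_nonneg _ hs0]
        ring

theorem exists_lintegral_ballMaximal_rpow_le {s : ℝ} (hs : 1 < s) :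
    ∃ C : ℝ≥0, ∀ f : E → ℝ≥0∞, Measurable f →
      ∫⁻ x, ballMaximal μ f x ^ s ∂μ ≤ C * ∫⁻ x, f x ^ s ∂μ := by
  obtain ⟨C, hC⟩ := exists_lintegral_mul_ballMaximal_rpow_le μ hs
  refine ⟨C, fun f hf => ?_⟩
  calc ∫⁻ x, ballMaximal μ f x ^ s ∂μ = ∫⁻ x, 1 * ballMaximal μ f x ^ s ∂μ := by simp
    _ ≤ C * ∫⁻ x, ballMaximal μ (fun _ => 1) x * f x ^ s ∂μ := hC _ f measurable_const hf
    _ ≤ C * ∫⁻ x, 1 * f x ^ s ∂μ := by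
        gcongr
        exact ballMaximal_const_le μ 1 _
    _ = _ := by simp

section VectorValued

variable {ι : Type*}

theorem exists_lintegral_tsum_ballMaximal_rpow_le_of_le_one [Countable ι] {s ρ : ℝ} (hs : 0 < s)
    (hρ : ρ ≤ 1) (hsρ : 1 < s * ρ) :
    ∃ C : ℝ≥0, ∀ F : ι → E → ℝ≥0∞, (∀ i, Measurable (F i)) →
      ∫⁻ x, (∑' i, F i x ^ s) ^ ρ ∂μ ≠ ∞ →
      ∫⁻ x, (∑' i, ballMaximal μ (F i) x ^ s) ^ ρ ∂μ ≤ C * ∫⁻ x, (∑' i, F i x ^ s) ^ ρ ∂μ := by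
  have hρ0 : 0 < ρ := pos_of_mul_pos_right (zero_lt_one.trans hsρ) hs.le
  obtain ⟨C, hC⟩ := exists_lintegral_ballMaximal_rpow_le μ hsρ
  refine ⟨C, fun F hF hfin => ?_⟩
  set T : E → ℝ≥0∞ := fun x => ∑' i, F i x ^ s
  have hT : Measurable T := Measurable.tsum fun i => (hF i).pow_const s
  have hT_top : ∀ᵐ x ∂μ, T x ≠ ∞ := by
    filter_upwards [ae_lt_top (hT.pow_const ρ) hfin] with x hx htop
    simp [htop, hρ0] at hx
  set w : E → ℝ≥0∞ := fun x => T x ^ s⁻¹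
  have hFw : ∀ i x, F i x ≤ w x := fun i x =>
    (ENNReal.le_rpow_inv_iff hs).2 (ENNReal.le_tsum (f := fun i => F i x ^ s) i)
  have hw_top : ∀ᵐ x ∂μ, w x ≠ ∞ := by
    filter_upwards [hT_top] with x hx using by finiteness
  set G : ι → E → ℝ≥0∞ := fun i y => F i y ^ ρ⁻¹ * w y ^ (1 - ρ⁻¹)
  have hMG : ∫⁻ x, ∑' i, ballMaximal μ (G i) x ^ (s * ρ) ∂μ ≤ C * ∫⁻ x, T x ^ ρ ∂μ :=
    calc ∫⁻ x, ∑' i, ballMaximal μ (G i) x ^ (s * ρ) ∂μ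
        = ∑' i, ∫⁻ x, ballMaximal μ (G i) x ^ (s * ρ) ∂μ := lintegral_tsum fun i => by fun_prop
      _ ≤ ∑' i, C * ∫⁻ x, G i x ^ (s * ρ) ∂μ := ENNReal.tsum_le_tsum fun i => hC _ (by fun_prop)
      _ = C * ∫⁻ x, ∑' i, G i x ^ (s * ρ) ∂μ := by
          rw [lintegral_tsum fun i => by fun_prop, ENNReal.tsum_mul_left]
      _ = C * ∫⁻ x, T x ^ ρ ∂μ := by
          congr 1
          refine lintegral_congr_ae ?_
          filter_upwards [hT_top] with x hx using tsum_rpow_mul_tsum_rpow_eq hs hρ0 hx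
  have hMw : ∫⁻ x, ballMaximal μ w x ^ (s * ρ) ∂μ ≤ C * ∫⁻ x, T x ^ ρ ∂μ := by
    refine (hC w (by fun_prop)).trans_eq ?_
    simp_rw [w, ← ENNReal.rpow_mul, inv_mul_cancel_left₀ hs.ne']
  calc ∫⁻ x, (∑' i, ballMaximal μ (F i) x ^ s) ^ ρ ∂μ
      ≤ _ := lintegral_tsum_ballMaximal_rpow_le_mul hF (by fun_prop) hFw hw_top hs.le hρ0 hρ
    _ ≤ (C * ∫⁻ x, T x ^ ρ ∂μ) ^ ρ * (C * ∫⁻ x, T x ^ ρ ∂μ) ^ (1 - ρ) := by gcongr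
    _ = C * ∫⁻ x, T x ^ ρ ∂μ := by
        rw [← ENNReal.rpow_add_of_nonneg _ _ hρ0.le (sub_nonneg.2 hρ), add_sub_cancel,
          ENNReal.rpow_one]

theorem lintegral_sum_ballMaximal_rpow_ne_top {s ρ : ℝ} (hρ : 1 ≤ ρ) (hsρ : 1 < s * ρ)
    {t : Finset ι} {F : ι → E → ℝ≥0∞} (hF : ∀ i, Measurable (F i))
    (hfin : ∫⁻ x, (∑ i ∈ t, F i x ^ s) ^ ρ ∂μ ≠ ∞) :
    ∫⁻ x, (∑ i ∈ t, ballMaximal μ (F i) x ^ s) ^ ρ ∂μ ≠ ∞ := by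
  obtain ⟨C, hC⟩ := exists_lintegral_ballMaximal_rpow_le μ hsρ
  refine lintegral_sum_rpow_ne_top (fun i _ => by fun_prop) hρ fun i hi => ne_of_lt ?_
  calc ∫⁻ x, (ballMaximal μ (F i) x ^ s) ^ ρ ∂μ ≤ C * ∫⁻ x, (F i x ^ s) ^ ρ ∂μ := by
        simpa only [ENNReal.rpow_mul] using hC (F i) (hF i)
    _ ≤ C * ∫⁻ x, (∑ i ∈ t, F i x ^ s) ^ ρ ∂μ := by
        gcongr with x
        exact Finset.single_le_sum (f := fun i => F i x ^ s) (fun _ _ => zero_le) hi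
    _ < ∞ := by finiteness

theorem exists_lintegral_sum_ballMaximal_rpow_le_of_one_lt {s ρ : ℝ} (hs : 1 < s) (hρ : 1 < ρ) :
    ∃ C : ℝ≥0, ∀ (t : Finset ι) (F : ι → E → ℝ≥0∞), (∀ i, Measurable (F i)) →
      ∫⁻ x, (∑ i ∈ t, F i x ^ s) ^ ρ ∂μ ≠ ∞ →
      ∫⁻ x, (∑ i ∈ t, ballMaximal μ (F i) x ^ s) ^ ρ ∂μ ≤
        C * ∫⁻ x, (∑ i ∈ t, F i x ^ s) ^ ρ ∂μ := by
  have hpq := Real.HolderConjugate.conjExponent hρ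
  set q := ρ.conjExponent
  obtain ⟨A, hA⟩ := exists_lintegral_mul_ballMaximal_rpow_le μ hs
  obtain ⟨B, hB⟩ := exists_lintegral_ballMaximal_rpow_le μ hpq.symm.lt
  refine ⟨(A * B ^ q⁻¹) ^ ρ, fun t F hF hfin => ?_⟩
  have hS_fin := lintegral_sum_ballMaximal_rpow_ne_top μ hρ.le (one_lt_mul_of_lt_of_le hs hρ.le)
    hF hfin
  set S : E → ℝ≥0∞ := fun x => ∑ i ∈ t, ballMaximal μ (F i) x ^ s
  set w : E → ℝ≥0∞ := fun x => S x ^ (ρ - 1)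
  have hw : Measurable w := by fun_prop
  have weighted : ∫⁻ x, S x ^ ρ ∂μ ≤ A * ∫⁻ x, ballMaximal μ w x * ∑ i ∈ t, F i x ^ s ∂μ :=
    calc ∫⁻ x, S x ^ ρ ∂μ = ∫⁻ x, w x * ∑ i ∈ t, ballMaximal μ (F i) x ^ s ∂μ := by
          refine lintegral_congr fun x => ?_
          conv_lhs => rw [← sub_add_cancel ρ 1, ENNReal.rpow_add_of_nonneg _ _ hpq.sub_one_pos.le
            zero_le_one, ENNReal.rpow_one]
      _ = ∑ i ∈ t, ∫⁻ x, w x * ballMaximal μ (F i) x ^ s ∂μ := by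
          simp_rw [Finset.mul_sum]
          exact lintegral_finsetSum _ fun i _ => by fun_prop
      _ ≤ ∑ i ∈ t, A * ∫⁻ x, ballMaximal μ w x * F i x ^ s ∂μ :=
          Finset.sum_le_sum fun i _ => hA w (F i) hw (hF i)
      _ = _ := by
          simp_rw [Finset.mul_sum]
          rw [lintegral_finsetSum _ fun i _ => by fun_prop, Finset.mul_sum]
  have hMw : ∫⁻ x, ballMaximal μ w x ^ q ∂μ ≤ B * ∫⁻ x, S x ^ ρ ∂μ := by
    refine (hB w hw).trans_eq ?_
    simp_rw [w, ← ENNReal.rpow_mul, hpq.sub_one_mul_conj]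
  rw [ENNReal.coe_rpow_of_nonneg _ hpq.nonneg, ENNReal.coe_mul,
    ENNReal.coe_rpow_of_nonneg _ hpq.symm.inv_nonneg]
  exact le_mul_lintegral_rpow_of_le_lintegral_mul (by fun_prop) (by fun_prop) hpq hS_fin
    weighted hMw

theorem exists_lintegral_tsum_ballMaximal_rpow_le [Countable ι] {r s : ℝ} (hr : 1 < r)
    (hs : 1 < s) :
    ∃ C : ℝ≥0, ∀ F : ι → E → ℝ≥0∞, (∀ i, Measurable (F i)) →
      ∫⁻ x, (∑' i, ballMaximal μ (F i) x ^ s) ^ (r / s) ∂μ ≤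
        C * ∫⁻ x, (∑' i, F i x ^ s) ^ (r / s) ∂μ := by
  have hs0 : 0 < s := zero_lt_one.trans hs
  suffices ∃ C : ℝ≥0, ∀ F : ι → E → ℝ≥0∞, (∀ i, Measurable (F i)) →
      ∫⁻ x, (∑' i, F i x ^ s) ^ (r / s) ∂μ ≠ ∞ →
      ∫⁻ x, (∑' i, ballMaximal μ (F i) x ^ s) ^ (r / s) ∂μ ≤
        C * ∫⁻ x, (∑' i, F i x ^ s) ^ (r / s) ∂μ by
    obtain ⟨C, hC⟩ := this
    refine ⟨C + 1, fun F hF => ?_⟩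
    rcases eq_or_ne (∫⁻ x, (∑' i, F i x ^ s) ^ (r / s) ∂μ) ∞ with htop | hfin
    · simp [htop]
    · refine (hC F hF hfin).trans ?_
      gcongr
      exact le_self_add
  rcases le_or_gt r s with hrs | hsr
  · exact exists_lintegral_tsum_ballMaximal_rpow_le_of_le_one μ hs0 ((div_le_one hs0).2 hrs)
      (by rwa [mul_div_cancel₀ _ hs0.ne'])
  · obtain ⟨C, hC⟩ := exists_lintegral_sum_ballMaximal_rpow_le_of_one_lt (ι := ι) μ hs
      ((one_lt_div hs0).2 hsr)
    refine ⟨C, fun F hF => ?_⟩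
    have hrs : 0 < r / s := by positivity
    rw [lintegral_tsum_rpow_eq_iSup (fun i => (hF i).pow_const s) hrs,
      lintegral_tsum_rpow_eq_iSup (fun i => (measurable_ballMaximal μ (F i)).pow_const s) hrs]
    intro hfin
    have hle := le_iSup fun t : Finset ι => ∫⁻ x, (∑ i ∈ t, F i x ^ s) ^ (r / s) ∂μ
    exact iSup_le fun t => (hC t F hF (ne_top_of_le_ne_top hfin (hle t))).trans <| by
      gcongr
      exact hle t

end VectorValued

end MaximalInequalities

section Cubes

variable {d : ℕ}

theorem cubeAt_subset_ball {c : Fin d → ℝ} {t : ℝ} (ht : 0 < t) {x : EuclideanSpace ℝ (Fin d)}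
    (hx : x ∈ cubeAt d c t) : cubeAt d c t ⊆ ball x ((d + 1) * t) := by
  intro y hy
  have hcoord : ∀ i, dist (y i) (x i) ^ 2 ≤ t ^ 2 := fun i => by
    gcongr
    rw [Real.dist_eq, abs_le]
    constructor <;> linarith [(hx i).1, (hx i).2, (hy i).1, (hy i).2]
  rw [mem_ball, EuclideanSpace.dist_eq, Real.sqrt_lt' (by positivity)]
  calc ∑ i, dist (y i) (x i) ^ 2 ≤ ∑ _i : Fin d, t ^ 2 := Finset.sum_le_sum fun i _ => hcoord i
    _ = d * t ^ 2 := by simp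
    _ < ((d + 1) * t) ^ 2 := by
        have : (0 : ℝ) ≤ d := d.cast_nonneg
        rw [mul_pow]
        gcongr
        nlinarith

theorem exists_modMaximal_le_ballMaximal (d : ℕ) {τ : ℝ} (hτ : 0 ≤ τ) :
    ∃ C : ℝ≥0, ∀ (f : EuclideanSpace ℝ (Fin d) → ℝ) (x : EuclideanSpace ℝ (Fin d)),
      modMaximal d τ f x ≤
        (C * ballMaximal volume (fun y => ENNReal.ofReal |f y| ^ τ) x) ^ (1 / τ) := by
  set B := volume (ball (0 : EuclideanSpace ℝ (Fin d)) 1)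
  have hB : B ≠ ∞ := measure_ball_lt_top.ne
  refine ⟨((d + 1) ^ d * B).toNNReal, fun f x => iSup_le ?_⟩
  rw [ENNReal.coe_toNNReal (by finiteness)]
  simp_rw [ENNReal.ofReal_rpow_of_nonneg (abs_nonneg _) hτ]
  rintro ⟨⟨c, t⟩, ht : 0 < t, hx : x ∈ cubeAt d c t⟩
  refine ENNReal.rpow_le_rpow ?_ (by positivity)
  have hR : 0 < (d + 1) * t := by positivity
  have htd : ENNReal.ofReal (t ^ d) ≠ 0 := (ENNReal.ofReal_pos.2 (pow_pos ht d)).ne'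
  have hvol : volume (ball x ((d + 1) * t)) = ENNReal.ofReal (t ^ d) * ((d + 1) ^ d * B) := by
    rw [Measure.addHaar_ball_of_pos _ _ hR, finrank_euclideanSpace_fin, mul_pow, mul_comm (_ ^ d),
      ENNReal.ofReal_mul (by positivity), mul_assoc, ENNReal.ofReal_pow (by positivity) d]
    norm_cast
  calc (ENNReal.ofReal (t ^ d))⁻¹ * ∫⁻ y in cubeAt d c t, ENNReal.ofReal (|f y| ^ τ)
      ≤ (ENNReal.ofReal (t ^ d))⁻¹ * ∫⁻ y in ball x ((d + 1) * t), ENNReal.ofReal (|f y| ^ τ) :=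
        mul_le_mul_right (lintegral_mono_set (cubeAt_subset_ball ht hx)) _
    _ = (d + 1) ^ d * B * ⨍⁻ y in ball x ((d + 1) * t), ENNReal.ofReal (|f y| ^ τ) ∂volume := by
        rw [← measure_mul_setLAverage _ measure_ball_lt_top.ne, hvol, mul_assoc,
          ENNReal.inv_mul_cancel_left htd ENNReal.ofReal_ne_top]
    _ ≤ _ := mul_le_mul_right (setLAverage_le_ballMaximal _ _ (mem_ball_self hR)) _

theorem exists_lintegral_tsum_modMaximal_rpow_le {ι : Type*} (d : ℕ) {τ q ρ : ℝ} (hτ : 0 < τ)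
    (hq : 0 ≤ q) (hρ : 0 ≤ ρ) :
    ∃ C : ℝ≥0, ∀ f : ι → EuclideanSpace ℝ (Fin d) → ℝ,
      ∫⁻ x, (∑' j, modMaximal d τ (f j) x ^ q) ^ ρ ≤
        C * ∫⁻ x, (∑' j,
          ballMaximal volume (fun y => ENNReal.ofReal |f j y| ^ τ) x ^ (q / τ)) ^ ρ := by
  obtain ⟨C, hC⟩ := exists_modMaximal_le_ballMaximal d hτ.le
  have hqτ : 0 ≤ q / τ := by positivity
  refine ⟨(C ^ (q / τ)) ^ ρ, fun f => ?_⟩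
  rw [ENNReal.coe_rpow_of_nonneg _ hρ, ENNReal.coe_rpow_of_nonneg _ hqτ,
    ← lintegral_const_mul' _ _ (by finiteness)]
  refine lintegral_mono fun x => ?_
  rw [← ENNReal.mul_rpow_of_nonneg _ _ hρ, ← ENNReal.tsum_mul_left]
  gcongr with j
  rw [← ENNReal.mul_rpow_of_nonneg _ _ hqτ, ← one_div_mul_eq_div, ENNReal.rpow_mul]
  exact ENNReal.rpow_le_rpow (hC (f j) x) hq

end Cubes

/-- The vector-valued Fefferman–Stein inequality for the modified maximal operator `M_τ`:
for `0 < τ < p < ∞` and `τ < q < ∞`,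
`‖(Σ_j |M_τ f_j|^q)^{1/q}‖_{L^p} ≤ K ‖(Σ_j |f_j|^q)^{1/q}‖_{L^p}`. -/
theorem fefferman_stein_modified (d : ℕ) (hd : 1 ≤ d) (τ p q : ℝ)
    (hτ : 0 < τ) (hτp : τ < p) (hτq : τ < q) :
    ∃ K : ℝ≥0∞, K ≠ ∞ ∧ ∀ f : ℕ → EuclideanSpace ℝ (Fin d) → ℝ,
      (∀ j, Measurable (f j)) →
      (∫⁻ x, (∑' j, (modMaximal d τ (f j) x) ^ q) ^ (p / q)) ^ (1 / p)
        ≤ K * (∫⁻ x, (∑' j, ENNReal.ofReal (|f j x|) ^ q) ^ (p / q)) ^ (1 / p) := by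
  have hp : 0 < p := hτ.trans hτp
  have hq : 0 < q := hτ.trans hτq
  obtain ⟨A, hA⟩ := exists_lintegral_tsum_modMaximal_rpow_le (ι := ℕ) d hτ hq.le
    (div_nonneg hp.le hq.le)
  obtain ⟨B, hB⟩ := exists_lintegral_tsum_ballMaximal_rpow_le (ι := ℕ)
    (volume : Measure (EuclideanSpace ℝ (Fin d))) ((one_lt_div hτ).2 hτp) ((one_lt_div hτ).2 hτq)
  rw [div_div_div_cancel_right₀ hτ.ne'] at hB
  refine ⟨(A * B) ^ (1 / p), by finiteness, fun f hf => ?_⟩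
  rw [← ENNReal.mul_rpow_of_nonneg _ _ (by positivity), mul_assoc]
  refine ENNReal.rpow_le_rpow ((hA f).trans ?_) (by positivity)
  have hpow : ∀ j x, (ENNReal.ofReal |f j x| ^ τ) ^ (q / τ) = ENNReal.ofReal |f j x| ^ q :=
    fun j x => by rw [← ENNReal.rpow_mul, mul_div_cancel₀ _ hτ.ne']
  simp_rw [← hpow]
  gcongr
  exact hB _ fun j => (hf j).abs.ennreal_ofReal.pow_const τ
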